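/- arXiv:1909.11744 — 8 statements merged into one kernel-verified Lean document; each statement's English description precedes it below -/
import Mathlib

section
/- Let J = (X, k, 𝓡) be a constrained binary k-means instance, let X_1, ..., X_k be an arbitrary partition of X, and let (c_1, ..., c_k) be a center tuple satisfying 𝓡 that minimizes Σ_{j=1}^k Φ(c_j, X_j). Let 0 < ε ≤ 1/2 and let τ ≥ c·(k/ε²)·log(1/ε) for a suitable absolute constant c. Let w_1, ..., w_k ∈ ℕ satisfy |X_j| ≤ w_j ≤ (1 + ε/2)·|X_j| for every j, and let S_1, ..., S_k be random multisets where S_j consists of τ points sampled independently and uniformly with replacement from X_j. Then the center tuple C = best_𝓡(J, S_1, ..., S_k, w_1, ..., w_k) satisfies 𝓡 and E[Φ({ĉ_1,...,ĉ_k}, X)] ≤ (1 + ε)·Σ_{j=1}^k Φ(c_j, X_j). -/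
/-!
The expected cost splits over the coordinates, so fix a coordinate and let `q_j` be the fraction
of `X_j` disagreeing there with `c_j`, `r_j` the fraction of the sample `S_j` doing so, and
`δ_j = r_j - q_j`. If the chosen column differs from the reference column exactly on `D`, its
excess cost is `L = ∑_{j ∈ D} n_j (1 - 2 q_j)`, while minimality of the chosen column gives
`∑_{j ∈ D} w_j (1 - 2 r_j) ≤ 0`. Replacing `w_j` by `n_j` costs at most `(ε/2) ∑ n_j q_j`, so `L` is
at most that plus `(5/2) ∑_{j ∈ D} n_j |δ_j|`.

By AM-GM, `|δ_j| ≤ t + δ_j² / (4t)` for every `t > 0`. The constant `t` contributes a multiple of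
`t ∑_{j ∈ D} n_j = t (L + 2 ∑_{j ∈ D} n_j q_j)`, so it is absorbed in `L` and the reference cost, and
what remains has expectation governed by the variance `E δ_j² ≤ q_j / τ`. Taking `t = ε / 40`
finishes the proof as soon as `τ ≥ 200 / ε²`, without any tail estimate or union bound over columns:
`excess_term` is the deterministic inequality and `sum_sq_dev_le` the variance bound.
-/

open Finset
open scoped Classical

/-- Points of the binary hypercube `{0,1}^d`, viewed as `d`-bit strings. -/
abbrev Pt (d : ℕ) := Fin d → Bool

/-- `Φ(c, X) = Σ_{x ∈ X} H(x, c)` for a single center `c` and a finite set `X`. -/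
noncomputable def phi1 {d : ℕ} (c : Pt d) (X : Finset (Pt d)) : ℕ :=
  ∑ x ∈ X, hammingDist x c

/-- `Φ(c, X)` for a single center and a multiset `X`. -/
noncomputable def phi1M {d : ℕ} (c : Pt d) (X : Multiset (Pt d)) : ℕ :=
  (X.map fun x => hammingDist x c).sum

/-- `min_{b ∈ B} H(x, b)`. -/
noncomputable def minDist {d : ℕ} (B : Finset (Pt d)) (x : Pt d) : ℕ :=
  sInf ((fun b => hammingDist x b) '' (B : Set (Pt d)))

/-- `Φ(B, X) = Σ_{x ∈ X} min_{b ∈ B} H(x, b)`. -/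
noncomputable def phiSet {d : ℕ} (B X : Finset (Pt d)) : ℕ :=
  ∑ x ∈ X, minDist B x

/-- `Φ({c_1,...,c_k}, X)` for a tuple of centers and a finite set `X`. -/
noncomputable def phiTuple {d k : ℕ} (c : Fin k → Pt d) (X : Finset (Pt d)) : ℕ :=
  ∑ x ∈ X, sInf (Set.range fun j => hammingDist x (c j))

/-- `Φ({c_1,...,c_k}, X)` for a tuple of centers and a multiset `X`. -/
noncomputable def phiTupleM {d k : ℕ} (c : Fin k → Pt d) (X : Multiset (Pt d)) : ℕ :=
  (X.map fun x => sInf (Set.range fun j => hammingDist x (c j))).sum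

/-- The tuple of centers `(c_1,...,c_k)` satisfies the relations `𝓡 = (R_1,...,R_d)`:
for every coordinate `i`, `(c_1[i],...,c_k[i]) ∈ R_i`. -/
def Sat {d k : ℕ} (R : Fin d → Finset (Fin k → Bool)) (c : Fin k → Pt d) : Prop :=
  ∀ i, (fun j => c j i) ∈ R i

/-- `Xp 1, ..., Xp k` is a partition of `X` into `k` (possibly empty) clusters. -/
def IsPartition {d k : ℕ} (X : Finset (Pt d)) (Xp : Fin k → Finset (Pt d)) : Prop :=
  (∀ j, Xp j ⊆ X) ∧ ∀ x ∈ X, ∃! j, x ∈ Xp j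

/-- The coordinate-`i` cost `f_i(b_1,...,b_k) = Σ_{j : b_j = 1} w_j·|S_j^{(i,0)}|
  + Σ_{j : b_j = 0} w_j·|S_j^{(i,1)}|` (natural-number weights). -/
noncomputable def fCost {d k : ℕ} (S : Fin k → Multiset (Pt d)) (w : Fin k → ℕ)
    (i : Fin d) (b : Fin k → Bool) : ℕ :=
  ∑ j, w j * (((S j).filter fun s => s i ≠ b j).card)

/-- `bestSel` implements `best_𝓡`: for every input it outputs a tuple satisfying `𝓡` whose
`i`-th column minimizes `f_i` over `R_i`, for every coordinate `i` (natural-number weights). -/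
def BestSpec {d k : ℕ} (R : Fin d → Finset (Fin k → Bool))
    (bestSel : (Fin k → Multiset (Pt d)) → (Fin k → ℕ) → (Fin k → Pt d)) : Prop :=
  ∀ S w, Sat R (bestSel S w) ∧
    ∀ i, ∀ b ∈ R i, fCost S w i (fun j => bestSel S w j i) ≤ fCost S w i b

/-- The coordinate-`i` cost `f_i` (real weights). -/
noncomputable def fCostR {d k : ℕ} (S : Fin k → Multiset (Pt d)) (w : Fin k → ℝ)
    (i : Fin d) (b : Fin k → Bool) : ℝ :=
  ∑ j, w j * ((((S j).filter fun s => s i ≠ b j).card : ℝ))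

/-- `bestSel` implements `best_𝓡` (real weights). -/
def BestSpecR {d k : ℕ} (R : Fin d → Finset (Fin k → Bool))
    (bestSel : (Fin k → Multiset (Pt d)) → (Fin k → ℝ) → (Fin k → Pt d)) : Prop :=
  ∀ S w, Sat R (bestSel S w) ∧
    ∀ i, ∀ b ∈ R i, fCostR S w i (fun j => bestSel S w j i) ≤ fCostR S w i b

/-- The `D²`-sampling mass of a point `x` with respect to a center set `B`:
`(min_{b∈B} H(x,b)) / Φ(B,X)`. -/
noncomputable def dmass {d : ℕ} (B X : Finset (Pt d)) (x : Pt d) : ℝ :=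
  (minDist B x : ℝ) / (phiSet B X : ℝ)

/-! ### Disagreement counts, costs and their splitting over coordinates -/

/-- The `{0,1}`-valued disagreement of two bits, as a real number. -/
noncomputable def dis (a b : Bool) : ℝ := if a = b then 0 else 1

/-- The fraction of the points of `X` whose `i`-th bit differs from `b`; it is `0` when `X` is
empty. -/
noncomputable def frac {d : ℕ} (X : Finset (Pt d)) (i : Fin d) (b : Bool) : ℝ :=
  (∑ x ∈ X, dis (x i) b) / (X.card : ℝ)

/-- The fraction of the sample `u` whose `i`-th bit differs from `b`; it is `0` when `τ = 0`. -/
noncomputable def sfrac {d τ : ℕ} (u : Fin τ → Pt d) (i : Fin d) (b : Bool) : ℝ :=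
  (∑ t, dis (u t i) b) / (τ : ℝ)

lemma dis_nonneg (a b : Bool) : 0 ≤ dis a b := by
  unfold dis; split_ifs <;> norm_num

lemma dis_sq (a b : Bool) : dis a b ^ 2 = dis a b := by
  unfold dis; split_ifs <;> norm_num

/-- Changing the reference bit from `b₀` to a different `b` complements the disagreement count. -/
lemma sum_dis {α : Type*} (A : Finset α) (p : α → Bool) (b b₀ : Bool) :
    ∑ x ∈ A, dis (p x) b = ∑ x ∈ A, dis (p x) b₀
      + dis b b₀ * ((A.card : ℝ) - 2 * ∑ x ∈ A, dis (p x) b₀) := by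
  have h : ∀ x ∈ A, dis (p x) b = dis (p x) b₀ + dis b b₀ * (1 - 2 * dis (p x) b₀) := by
    intro x _
    cases p x <;> cases b <;> cases b₀ <;> norm_num [dis]
  rw [Finset.sum_congr rfl h, Finset.sum_add_distrib, ← Finset.mul_sum, Finset.sum_sub_distrib,
    ← Finset.mul_sum]
  simp

lemma frac_nonneg {d : ℕ} (X : Finset (Pt d)) (i : Fin d) (b : Bool) : 0 ≤ frac X i b :=
  div_nonneg (Finset.sum_nonneg fun _ _ => dis_nonneg _ _) (Nat.cast_nonneg _)

lemma card_mul_frac {d : ℕ} {X : Finset (Pt d)} (hX : X.Nonempty) (i : Fin d) (b : Bool) :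
    (X.card : ℝ) * frac X i b = ∑ x ∈ X, dis (x i) b := by
  have : (X.card : ℝ) ≠ 0 := by exact_mod_cast hX.card_pos.ne'
  unfold frac; field_simp

lemma frac_le_one {d : ℕ} (X : Finset (Pt d)) (i : Fin d) (b : Bool) : frac X i b ≤ 1 := by
  apply div_le_one_of_le₀ _ (Nat.cast_nonneg _)
  calc ∑ x ∈ X, dis (x i) b ≤ ∑ x ∈ X, (1 : ℝ) :=
        Finset.sum_le_sum fun x _ => by unfold dis; split_ifs <;> norm_num
    _ = X.card := by simp

lemma hammingDist_eq {d : ℕ} (x c : Pt d) : (hammingDist x c : ℝ) = ∑ i, dis (x i) (c i) := by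
  unfold hammingDist dis
  rw [Finset.card_filter]
  push_cast
  exact Finset.sum_congr rfl fun i _ => by by_cases h : x i = c i <;> simp [h]

lemma phi1_eq {d : ℕ} (c : Pt d) (X : Finset (Pt d)) :
    (phi1 c X : ℝ) = ∑ i, ∑ x ∈ X, dis (x i) (c i) := by
  unfold phi1
  push_cast
  simp_rw [hammingDist_eq]
  exact Finset.sum_comm

lemma fCost_eq {d k τ : ℕ} (s : Fin k → Fin τ → Pt d) (w : Fin k → ℕ) (i : Fin d)
    (b : Fin k → Bool) :
    (fCost (fun j => Multiset.map (s j) Finset.univ.val) w i b : ℝ)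
      = ∑ j, (w j : ℝ) * ∑ t, dis (s j t i) (b j) := by
  unfold fCost
  push_cast
  refine Finset.sum_congr rfl fun j _ => ?_
  congr 1
  rw [Multiset.filter_map, Multiset.card_map, ← Finset.filter_val, ← Finset.card_def,
    Finset.card_filter]
  push_cast
  unfold dis
  exact Finset.sum_congr rfl fun t _ => by by_cases h : s j t i = b j <;> simp [h]

/-- Assigning every point to the center of its own cluster can only increase its distance. -/
lemma phiTuple_le {d k : ℕ} (c : Fin k → Pt d) (X : Finset (Pt d)) (Xp : Fin k → Finset (Pt d))
    (hP : IsPartition X Xp) : phiTuple c X ≤ ∑ j, phi1 (c j) (Xp j) := by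
  unfold phiTuple phi1
  have hX : X ⊆ Finset.univ.biUnion Xp := by
    intro x hx
    obtain ⟨j, hj, -⟩ := hP.2 x hx
    exact Finset.mem_biUnion.2 ⟨j, Finset.mem_univ _, hj⟩
  calc ∑ x ∈ X, sInf (Set.range fun j => hammingDist x (c j))
      ≤ ∑ x ∈ Finset.univ.biUnion Xp, sInf (Set.range fun j => hammingDist x (c j)) :=
        Finset.sum_le_sum_of_subset hX
    _ = ∑ j, ∑ x ∈ Xp j, sInf (Set.range fun j => hammingDist x (c j)) := by
        apply Finset.sum_biUnion
        intro a _ b _ hab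
        refine Finset.disjoint_left.2 fun x hxa hxb => hab ?_
        exact (hP.2 x (hP.1 a hxa)).unique hxa hxb
    _ ≤ _ := Finset.sum_le_sum fun j _ => Finset.sum_le_sum fun x _ => Nat.sInf_le ⟨j, rfl⟩

/-! ### Excess cost of one cluster in one coordinate -/

/-- The contribution of one cluster to the excess cost. Here `e` tells whether the chosen bit
differs from the reference bit, `q` is the true and `r` the sampled disagreement
fraction; AM-GM with parameter `t` replaces the first-order deviation by its square, and the resulting linear term is charged to the left side and to `n * q`. -/
lemma excess_term {n w q r t ε e : ℝ} (hn : 0 ≤ n) (hnw : n ≤ w) (hw : w ≤ (1 + ε / 2) * n)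
    (hq : 0 ≤ q) (hq1 : q ≤ 1) (ht : 0 < t) (hε : 0 < ε) (hε2 : ε ≤ 1 / 2) (he : e = 0 ∨ e = 1) :
    (1 - 5 / 2 * t) * (e * (n * (1 - 2 * q)))
      ≤ w * (e * (1 - 2 * r)) + (ε / 2 + 5 * t) * (n * q) + 5 / (8 * t) * (n * (r - q) ^ 2) := by
  have hnq : 0 ≤ n * q := mul_nonneg hn hq
  rcases he with rfl | rfl
  · have : 0 ≤ 5 / (8 * t) * (n * (r - q) ^ 2) := by positivity
    have : 0 ≤ (ε / 2 + 5 * t) * (n * q) := by positivity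
    linarith
  · have h1 : 2 * |r - q| ≤ 2 * t + (r - q) ^ 2 / (2 * t) := by
      have : 2 * t + (r - q) ^ 2 / (2 * t) - 2 * |r - q| = (2 * t - |r - q|) ^ 2 / (2 * t) := by
        rw [← sq_abs (r - q)]; field_simp; ring
      have : 0 ≤ (2 * t - |r - q|) ^ 2 / (2 * t) := by positivity
      linarith
    have h2 : w * (2 * (r - q)) ≤ 5 / 4 * n * (2 * t + (r - q) ^ 2 / (2 * t)) := by
      calc w * (2 * (r - q)) ≤ w * (2 * |r - q|) := by
            have := le_abs_self (r - q)
            gcongr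
            linarith
        _ ≤ (5 / 4 * n) * (2 * |r - q|) := by
            gcongr
            nlinarith
        _ ≤ _ := by gcongr
    have h3 : 5 / 4 * n * (2 * t + (r - q) ^ 2 / (2 * t))
        = 5 / 2 * (t * n) + 5 / (8 * t) * (n * (r - q) ^ 2) := by
      field_simp; ring
    have h4 : (w - n) * q ≤ ε / 2 * (n * q) := by nlinarith
    have h5 : 0 ≤ (w - n) * (1 - q) := mul_nonneg (by linarith) (by linarith)
    nlinarith

/-! ### Variance of the sampled fractions -/

/-- The sum over a product of finite sets of a function of one coordinate, with the division by
the size of that factor cleared. -/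
lemma card_mul_sum_piFinset {ι α : Type*} [Fintype ι] [DecidableEq ι] (A : ι → Finset α)
    (j : ι) (f : α → ℝ) :
    ((A j).card : ℝ) * ∑ s ∈ Fintype.piFinset A, f (s j)
      = (∏ r, ((A r).card : ℝ)) * ∑ x ∈ A j, f x := by
  have h := Finset.prod_univ_sum A (fun r x => if r = j then f x else 1)
  simp only [Finset.prod_ite_eq', Finset.mem_univ, if_true] at h
  rw [← h, ← Finset.mul_prod_erase _ _ (Finset.mem_univ j),
    ← Finset.mul_prod_erase Finset.univ (fun r => ((A r).card : ℝ)) (Finset.mem_univ j)]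
  have h2 : ∏ r ∈ Finset.univ.erase j, ∑ x ∈ A r, (if r = j then f x else 1)
      = ∏ r ∈ Finset.univ.erase j, ((A r).card : ℝ) := by
    refine Finset.prod_congr rfl fun r hr => ?_
    simp [Finset.ne_of_mem_erase hr]
  rw [h2]
  simp only [if_true]
  ring

/-- Distinct entries of a sample are uncorrelated. -/
lemma sum_piFinset_mul_eq_zero {α : Type*} {τ : ℕ} (B : Finset α) (a : α → ℝ)
    (ha : ∑ x ∈ B, a x = 0) {t t' : Fin τ} (htt : t ≠ t') :
    ∑ u ∈ Fintype.piFinset (fun _ : Fin τ => B), a (u t) * a (u t') = 0 := by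
  have h := Finset.prod_univ_sum (fun _ : Fin τ => B)
    (fun r x => (if r = t then a x else 1) * (if r = t' then a x else 1))
  simp only [Finset.prod_mul_distrib, Finset.prod_ite_eq', Finset.mem_univ, if_true] at h
  rw [← h]
  apply Finset.prod_eq_zero (Finset.mem_univ t)
  simp [htt, ha]

/-- The variance of a sum of independent centered samples. -/
lemma sum_piFinset_sq {α : Type*} {τ : ℕ} (B : Finset α) (a : α → ℝ)
    (ha : ∑ x ∈ B, a x = 0) :
    (B.card : ℝ) * ∑ u ∈ Fintype.piFinset (fun _ : Fin τ => B), (∑ t, a (u t)) ^ 2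
      = (B.card : ℝ) ^ τ * (τ * ∑ x ∈ B, a x ^ 2) := by
  have h1 : ∑ u ∈ Fintype.piFinset (fun _ : Fin τ => B), (∑ t, a (u t)) ^ 2
      = ∑ t : Fin τ, ∑ u ∈ Fintype.piFinset (fun _ : Fin τ => B), a (u t) ^ 2 := by
    simp_rw [sq, Finset.sum_mul_sum]
    rw [Finset.sum_comm]
    refine Finset.sum_congr rfl fun t _ => ?_
    rw [Finset.sum_comm]
    refine Finset.sum_eq_single t (fun t' _ h => ?_) (by simp)
    exact sum_piFinset_mul_eq_zero B a ha h.symm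
  rw [h1, Finset.mul_sum]
  have h2 : ∀ t ∈ (Finset.univ : Finset (Fin τ)),
      (B.card : ℝ) * ∑ u ∈ Fintype.piFinset (fun _ : Fin τ => B), a (u t) ^ 2
        = (B.card : ℝ) ^ τ * ∑ x ∈ B, a x ^ 2 := by
    intro t _
    rw [card_mul_sum_piFinset (fun _ : Fin τ => B) t (fun x => a x ^ 2)]
    simp
  rw [Finset.sum_congr rfl h2]
  simp
  ring

/-- The mean square deviation of the sampled disagreement fraction of cluster `j` is at most
`q_j / τ`; the normalization by the number of sample families is cleared. -/
lemma sum_sq_dev_le {d k τ : ℕ} (hτ : 0 < τ) (Xp : Fin k → Finset (Pt d))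
    (hne : ∀ j, (Xp j).Nonempty) (j : Fin k) (i : Fin d) (b : Bool) :
    ∑ s ∈ Fintype.piFinset (fun j : Fin k => Fintype.piFinset fun _ : Fin τ => Xp j),
        (sfrac (s j) i b - frac (Xp j) i b) ^ 2
      ≤ (∏ j, ((Xp j).card : ℝ) ^ τ) * (frac (Xp j) i b / τ) := by
  set n : ℝ := ((Xp j).card : ℝ) with hn
  have hn0 : 0 < n := by rw [hn]; exact_mod_cast (hne j).card_pos
  have hτ0 : (0 : ℝ) < τ := by exact_mod_cast hτ
  set q := frac (Xp j) i b with hq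
  have hq0 : 0 ≤ q := frac_nonneg _ _ _
  have hs : ∑ x ∈ Xp j, dis (x i) b = n * q := (card_mul_frac (hne j) i b).symm
  have ha : ∑ x ∈ Xp j, (dis (x i) b - q) = 0 := by
    rw [Finset.sum_sub_distrib, hs]
    simp [hn]
  have ha2 : ∑ x ∈ Xp j, (dis (x i) b - q) ^ 2 ≤ n * q := by
    have : ∀ x ∈ Xp j, (dis (x i) b - q) ^ 2 = (1 - 2 * q) * dis (x i) b + q ^ 2 := by
      intro x _
      have := dis_sq (x i) b
      linear_combination this
    rw [Finset.sum_congr rfl this, Finset.sum_add_distrib, ← Finset.mul_sum, hs]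
    simp only [Finset.sum_const, nsmul_eq_mul, ← hn]
    nlinarith [mul_nonneg hn0.le (sq_nonneg q)]
  have hdev : ∀ u : Fin τ → Pt d,
      (sfrac u i b - q) ^ 2 = (∑ t, (dis (u t i) b - q)) ^ 2 / (τ : ℝ) ^ 2 := by
    intro u
    rw [Finset.sum_sub_distrib]
    simp only [sfrac, Finset.sum_const, Finset.card_univ, Fintype.card_fin, nsmul_eq_mul]
    field_simp
  have h1 := card_mul_sum_piFinset
    (fun j : Fin k => Fintype.piFinset fun _ : Fin τ => Xp j) j
    (fun u => (sfrac u i b - q) ^ 2)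
  have h2 := sum_piFinset_sq (τ := τ) (Xp j) (fun x => dis (x i) b - q) ha
  simp only [Fintype.card_piFinset, Finset.prod_const, Finset.card_univ, Fintype.card_fin,
    Nat.cast_pow, ← hn] at h1 h2
  have hP : (0 : ℝ) ≤ ∏ j, ((Xp j).card : ℝ) ^ τ :=
    Finset.prod_nonneg fun j _ => pow_nonneg (Nat.cast_nonneg _) _
  have h3 : ∑ u ∈ Fintype.piFinset (fun _ : Fin τ => Xp j), (sfrac u i b - q) ^ 2
      ≤ n ^ τ * (q / τ) := by
    simp_rw [hdev]
    rw [← Finset.sum_div, div_le_iff₀ (by positivity)]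
    refine le_of_mul_le_mul_left ?_ hn0
    rw [h2]
    calc n ^ τ * (τ * ∑ x ∈ Xp j, (dis (x i) b - q) ^ 2) ≤ n ^ τ * (τ * (n * q)) := by gcongr
      _ = n * (n ^ τ * (q / τ) * (τ : ℝ) ^ 2) := by field_simp
  refine le_of_mul_le_mul_left ?_ (pow_pos hn0 τ)
  rw [h1]
  calc (∏ j, ((Xp j).card : ℝ) ^ τ) * ∑ u ∈ Fintype.piFinset (fun _ : Fin τ => Xp j),
        (sfrac u i b - q) ^ 2 ≤ (∏ j, ((Xp j).card : ℝ) ^ τ) * (n ^ τ * (q / τ)) :=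
        mul_le_mul_of_nonneg_left h3 hP
    _ = _ := by ring

/-! ### Excess cost for a fixed sample -/

/-- The deterministic bound on the excess cost of the columns selected from a fixed sample, summed
over all coordinates. -/
lemma excess_le {d k τ : ℕ} (hτ : 0 < τ) {R : Fin d → Finset (Fin k → Bool)}
    {Xp : Fin k → Finset (Pt d)} (hne : ∀ j, (Xp j).Nonempty) {c₀ c : Fin k → Pt d}
    (hsat : Sat R c₀) {ε t : ℝ} (hε : 0 < ε) (hε2 : ε ≤ 1 / 2) (ht : 0 < t) {w : Fin k → ℕ}
    (hw : ∀ j, ((Xp j).card : ℝ) ≤ (w j : ℝ) ∧ (w j : ℝ) ≤ (1 + ε / 2) * ((Xp j).card : ℝ))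
    (s : Fin k → Fin τ → Pt d)
    (hc : ∀ i, ∀ b ∈ R i, fCost (fun j => Multiset.map (s j) Finset.univ.val) w i (fun j => c j i)
      ≤ fCost (fun j => Multiset.map (s j) Finset.univ.val) w i b) :
    (1 - 5 / 2 * t) * (∑ j, (phi1 (c j) (Xp j) : ℝ) - ∑ j, (phi1 (c₀ j) (Xp j) : ℝ))
      ≤ (ε / 2 + 5 * t) * ∑ j, (phi1 (c₀ j) (Xp j) : ℝ)
        + 5 / (8 * t) * ∑ i, ∑ j, ((Xp j).card : ℝ)
          * (sfrac (s j) i (c₀ j i) - frac (Xp j) i (c₀ j i)) ^ 2 := by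
  have hτ0 : (0 : ℝ) < τ := by exact_mod_cast hτ
  have hopt : ∑ j, (phi1 (c₀ j) (Xp j) : ℝ)
      = ∑ i, ∑ j, ((Xp j).card : ℝ) * frac (Xp j) i (c₀ j i) := by
    simp_rw [phi1_eq, fun j i => card_mul_frac (hne j) i (c₀ j i)]
    exact Finset.sum_comm
  have hdiff : ∑ j, (phi1 (c j) (Xp j) : ℝ) - ∑ j, (phi1 (c₀ j) (Xp j) : ℝ)
      = ∑ i, ∑ j, dis (c j i) (c₀ j i)
        * (((Xp j).card : ℝ) * (1 - 2 * frac (Xp j) i (c₀ j i))) := by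
    rw [← Finset.sum_sub_distrib, Finset.sum_comm]
    refine Finset.sum_congr rfl fun j _ => ?_
    rw [phi1_eq, phi1_eq, ← Finset.sum_sub_distrib]
    refine Finset.sum_congr rfl fun i _ => ?_
    rw [sum_dis (Xp j) (fun x => x i) (c j i) (c₀ j i)]
    simp only [← card_mul_frac (hne j)]
    ring
  have hmin : ∀ i, ∑ j, (w j : ℝ) * (dis (c j i) (c₀ j i) * (1 - 2 * sfrac (s j) i (c₀ j i)))
      ≤ 0 := by
    intro i
    have h : (fCost (fun j => Multiset.map (s j) Finset.univ.val) w i (fun j => c j i) : ℝ)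
        ≤ fCost (fun j => Multiset.map (s j) Finset.univ.val) w i (fun j => c₀ j i) := by
      exact_mod_cast hc i _ (hsat i)
    rw [fCost_eq, fCost_eq, ← sub_nonpos, ← Finset.sum_sub_distrib] at h
    refine nonpos_of_mul_nonpos_right (a := (τ : ℝ)) ?_ hτ0
    refine le_trans (le_of_eq ?_) h
    rw [Finset.mul_sum]
    refine Finset.sum_congr rfl fun j _ => ?_
    rw [sum_dis Finset.univ (fun r => s j r i) (c j i) (c₀ j i)]
    simp only [sfrac, Finset.card_univ, Fintype.card_fin]
    field_simp
    ring
  rw [hdiff, hopt]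
  simp_rw [Finset.mul_sum]
  rw [← Finset.sum_add_distrib]
  refine Finset.sum_le_sum fun i _ => ?_
  have hterm := Finset.sum_le_sum fun (j : Fin k) (_ : j ∈ Finset.univ) =>
    excess_term (r := sfrac (s j) i (c₀ j i)) (t := t) (e := dis (c j i) (c₀ j i))
      (Nat.cast_nonneg (Xp j).card) (hw j).1 (hw j).2
      (frac_nonneg (Xp j) i (c₀ j i)) (frac_le_one _ _ _) ht hε hε2
      (by unfold dis; split_ifs <;> simp)
  rw [Finset.sum_add_distrib, Finset.sum_add_distrib] at hterm
  linarith [hmin i]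

/-! ### The sampling bound -/

/-- sampling theorem of Fomin et al. / Ban et al..
Uniform sampling with replacement from each cluster `X_j` is modeled by summing over all
sample functions `s : Fin k → Fin τ → Pt d` with `s j t ∈ X_j`, each having probability
`∏_j |X_j|^{-τ}`; the expectation is written as that weighted sum divided by `∏_j |X_j|^τ`.
The minimizer `best_𝓡` (with arbitrary tie-breaking) is modeled by an arbitrary selection
function `bestSel` satisfying `BestSpec`. -/
theorem stmt0 :
    ∃ cst : ℝ, 0 < cst ∧
      ∀ (d k : ℕ), 0 < k →
      ∀ (X : Finset (Pt d))
        (R : Fin d → Finset (Fin k → Bool)), (∀ i, (R i).Nonempty) →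
      ∀ (Xp : Fin k → Finset (Pt d)), IsPartition X Xp → (∀ j, (Xp j).Nonempty) →
      ∀ (copt : Fin k → Pt d), Sat R copt →
      (∀ c, Sat R c → (∑ j, phi1 (copt j) (Xp j)) ≤ ∑ j, phi1 (c j) (Xp j)) →
      ∀ (ε : ℝ), 0 < ε → ε ≤ 1 / 2 →
      ∀ (τ : ℕ), (τ : ℝ) ≥ cst * ((k : ℝ) / ε ^ 2) * Real.log (1 / ε) →
      ∀ (w : Fin k → ℕ),
        (∀ j, ((Xp j).card : ℝ) ≤ (w j : ℝ) ∧ (w j : ℝ) ≤ (1 + ε / 2) * ((Xp j).card : ℝ)) →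
      ∀ (bestSel : (Fin k → Multiset (Pt d)) → (Fin k → ℕ) → (Fin k → Pt d)),
        BestSpec R bestSel →
      (∀ s : Fin k → Fin τ → Pt d,
          Sat R (bestSel (fun j => Multiset.map (s j) Finset.univ.val) w)) ∧
      (∑ s ∈ Fintype.piFinset (fun j : Fin k => Fintype.piFinset fun _ : Fin τ => Xp j),
            (phiTuple (bestSel (fun j => Multiset.map (s j) Finset.univ.val) w) X : ℝ))
          / (∏ j, ((Xp j).card : ℝ) ^ τ)
        ≤ (1 + ε) * ∑ j, (phi1 (copt j) (Xp j) : ℝ) := by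
  refine ⟨300, by norm_num, ?_⟩
  intro d k hk X R _ Xp hP hne copt hsat _ ε hε hε2 τ hτ w hw bestSel hbest
  refine ⟨fun s => (hbest _ _).1, ?_⟩
  have hε' : (0 : ℝ) < ε ^ 2 := by positivity
  -- The number of samples needed by the second-moment argument.
  have hτ200 : 200 ≤ τ * ε ^ 2 := by
    have hlog : 2 / 3 ≤ Real.log (1 / ε) := by
      have h1 : Real.log 2 ≤ Real.log (1 / ε) :=
        Real.log_le_log (by norm_num) (by rw [le_div_iff₀ hε]; linarith)
      linarith [Real.log_two_gt_d9]
    have hk1 : (1 : ℝ) ≤ k := by exact_mod_cast hk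
    have h2 : 300 * ((k : ℝ) / ε ^ 2) * Real.log (1 / ε) * ε ^ 2
        = 300 * (k * Real.log (1 / ε)) := by field_simp
    have h3 : 300 * ((k : ℝ) / ε ^ 2) * Real.log (1 / ε) * ε ^ 2 ≤ τ * ε ^ 2 := by gcongr
    nlinarith
  have hτ0 : (0 : ℝ) < τ := by
    by_contra h
    nlinarith
  have hτ1 : 0 < τ := by exact_mod_cast hτ0
  set O : ℝ := ∑ j, (phi1 (copt j) (Xp j) : ℝ) with hO
  have hO0 : 0 ≤ O := by positivity
  set P : ℝ := ∏ j, ((Xp j).card : ℝ) ^ τ with hPdef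
  have hP0 : 0 < P :=
    Finset.prod_pos fun j _ => pow_pos (by exact_mod_cast (hne j).card_pos) _
  set Ω := Fintype.piFinset (fun j : Fin k => Fintype.piFinset fun _ : Fin τ => Xp j) with hΩ
  have hcard : (Ω.card : ℝ) = P := by
    simp [hΩ, hPdef, Fintype.card_piFinset]
  set c : (Fin k → Fin τ → Pt d) → Fin k → Pt d :=
    fun s => bestSel (fun j => Multiset.map (s j) Finset.univ.val) w with hc
  have hvar : ∑ s ∈ Ω, ∑ i, ∑ j, ((Xp j).card : ℝ)
      * (sfrac (s j) i (copt j i) - frac (Xp j) i (copt j i)) ^ 2 ≤ P * (O / τ) := by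
    have hopt : O = ∑ i, ∑ j, ((Xp j).card : ℝ) * frac (Xp j) i (copt j i) := by
      rw [hO]
      simp_rw [phi1_eq, fun j i => card_mul_frac (hne j) i (copt j i)]
      exact Finset.sum_comm
    rw [Finset.sum_comm, hopt, Finset.sum_div, Finset.mul_sum]
    refine Finset.sum_le_sum fun i _ => ?_
    rw [Finset.sum_comm, Finset.sum_div, Finset.mul_sum]
    refine Finset.sum_le_sum fun j _ => ?_
    rw [← Finset.mul_sum]
    calc _ ≤ ((Xp j).card : ℝ) * (P * (frac (Xp j) i (copt j i) / τ)) := by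
          gcongr
          exact sum_sq_dev_le hτ1 Xp hne j i (copt j i)
      _ = _ := by ring
  -- The AM-GM parameter `t = ε / 40` leaves a total relative error below `ε`.
  have hsum : (1 - 5 / 2 * (ε / 40)) * (∑ s ∈ Ω, ∑ j, (phi1 (c s j) (Xp j) : ℝ) - P * O)
      ≤ P * ((ε / 2 + 5 * (ε / 40)) * O) + 5 / (8 * (ε / 40)) * (P * (O / τ)) := by
    have h := Finset.sum_le_sum fun s (_ : s ∈ Ω) =>
      excess_le (t := ε / 40) hτ1 hne hsat hε hε2 (by positivity) hw s
        (hbest (fun j => Multiset.map (s j) Finset.univ.val) w).2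
    rw [← Finset.mul_sum, Finset.sum_sub_distrib, Finset.sum_add_distrib, ← Finset.mul_sum,
      ← Finset.mul_sum] at h
    simp only [Finset.sum_const, nsmul_eq_mul, hcard] at h
    have h2 := mul_le_mul_of_nonneg_left hvar (by positivity : 0 ≤ 5 / (8 * (ε / 40)))
    linarith
  have hnoise : 5 / (8 * (ε / 40)) * (P * (O / τ)) ≤ ε / 8 * (P * O) := by
    have : 5 / (8 * (ε / 40)) * (P * (O / τ)) = 25 / (ε * τ) * (P * O) := by
      field_simp; ring
    rw [this]
    refine mul_le_mul_of_nonneg_right ?_ (by positivity)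
    rw [div_le_iff₀ (by positivity)]
    nlinarith
  have hcost : ∑ s ∈ Ω, (phiTuple (c s) X : ℝ) ≤ ∑ s ∈ Ω, ∑ j, (phi1 (c s j) (Xp j) : ℝ) :=
    Finset.sum_le_sum fun s _ => by exact_mod_cast phiTuple_le (c s) X Xp hP
  have hfin : ∑ s ∈ Ω, ∑ j, (phi1 (c s j) (Xp j) : ℝ) ≤ (1 + ε) * O * P := by
    by_contra! hlt
    have hPO : 0 ≤ P * O := by positivity
    have h1 : (1 - 5 / 2 * (ε / 40)) * (ε * (P * O))
        < (1 - 5 / 2 * (ε / 40)) * (∑ s ∈ Ω, ∑ j, (phi1 (c s j) (Xp j) : ℝ) - P * O) :=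
      mul_lt_mul_of_pos_left (by linarith) (by linarith)
    have h2 : ε * (ε * (P * O)) ≤ 1 / 2 * (ε * (P * O)) := by gcongr
    have h3 : 0 ≤ ε * (P * O) := by positivity
    linarith
  rw [div_le_iff₀ hP0]
  exact hcost.trans hfin
end

section
/- For every j ∈ I_l (in fact for every j ∈ {1,...,k}), Δ_j ≥ (4·n̄_j/ε)·R_j, i.e. Φ(c_j, X_j) ≥ (4·|X_j^near|/ε)·(ε/9)·Φ(B, X_j)/|X_j|. -/
/-!
The bound is the triangle inequality used twice.
Write `c = copt j`, `Δ = Φ(c, X_j)`, `m = Φ(B, X_j) / n_j`, and let `D` be the distance of `c` to `B`.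
Since the distance to `B` is 1-Lipschitz (`minDist_le_add`):

* summing `minDist B x ≤ H(x, c) + D` over the cluster gives `n_j m ≤ Δ + n_j D`;
* summing `D ≤ H(x, c) + minDist B x` over the near points gives `n̄_j D ≤ Δ + n̄_j (ε/9) m`.

Eliminating `D` and using `n̄_j ≤ n_j` yields `n̄_j m ≤ 2Δ + n̄_j (ε/9) m`, and `ε ≤ 1/2` turns this into
`Δ ≥ (17/36) n̄_j m ≥ (4/9) n̄_j m`.
-/

open Finset
open scoped Classical

/-- The distance to a nonempty center set is 1-Lipschitz. -/
theorem minDist_le_add {d : ℕ} {B : Finset (Pt d)} (hB : B.Nonempty) (x y : Pt d) :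
    minDist B x ≤ hammingDist x y + minDist B y := by
  have hne : ((fun b => hammingDist y b) '' (B : Set (Pt d))).Nonempty :=
    (Finset.coe_nonempty.mpr hB).image _
  obtain ⟨b, hb, hby⟩ := Nat.sInf_mem hne
  have hx : minDist B x ≤ hammingDist x b := Nat.sInf_le ⟨b, hb, rfl⟩
  have hy : hammingDist y b = minDist B y := hby
  have := hammingDist_triangle x y b
  omega

/-- for every `j`, `Δ_j ≥ (4·n̄_j/ε)·R_j`, i.e.
`Φ(c_j, X_j) ≥ (4·|X_j^near|/ε)·((ε/9)·Φ(B,X_j)/|X_j|)`. -/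
theorem stmt3
    (d k : ℕ) (hk : 0 < k) (X : Finset (Pt d))
    (R : Fin d → Finset (Fin k → Bool)) (hR : ∀ i, (R i).Nonempty)
    (ε α : ℝ) (hε0 : 0 < ε) (hε1 : ε ≤ 1 / 2) (hα : 1 ≤ α)
    -- `copt` is an optimal center tuple satisfying 𝓡; `Xp` is the induced partition
    (copt : Fin k → Pt d) (hcSat : Sat R copt)
    (hcmin : ∀ c, Sat R c → phiTuple copt X ≤ phiTuple c X)
    (Xp : Fin k → Finset (Pt d)) (hpart : IsPartition X Xp)
    (hind : ∀ j, ∀ x ∈ Xp j, ∀ j', hammingDist x (copt j) ≤ hammingDist x (copt j'))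
    -- `B` with Φ(B,X) ≤ α·OPT★ (OPT★ = unconstrained binary k-means optimum of (X,k))
    (B : Finset (Pt d)) (hBne : B.Nonempty)
    (hBapx : ∀ c : Fin k → Pt d, (phiSet B X : ℝ) ≤ α * (phiTuple c X : ℝ))
    -- `Xnear j = X_j^near`, the points of `X_j` within distance `R_j = (ε/9)·Φ(B,X_j)/n_j` of `B`
    (Xnear : Fin k → Finset (Pt d))
    (hXnear : ∀ j x, x ∈ Xnear j ↔ x ∈ Xp j ∧
      (minDist B x : ℝ) ≤ ε / 9 * (phiSet B (Xp j) : ℝ) / ((Xp j).card : ℝ))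
    (j : Fin k) :
    (phi1 (copt j) (Xp j) : ℝ) ≥
      4 * ((Xnear j).card : ℝ) / ε *
        (ε / 9 * (phiSet B (Xp j) : ℝ) / ((Xp j).card : ℝ)) := by
  have hsub : Xnear j ⊆ Xp j := fun x hx => ((hXnear j x).1 hx).1
  have hcard : ((Xnear j).card : ℝ) ≤ (Xp j).card := by
    exact_mod_cast Finset.card_le_card hsub
  have hcluster : (phiSet B (Xp j) : ℝ) ≤
      phi1 (copt j) (Xp j) + (Xp j).card * minDist B (copt j) := by
    have : phiSet B (Xp j) ≤ phi1 (copt j) (Xp j) + (Xp j).card * minDist B (copt j) := by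
      unfold phiSet phi1
      rw [← smul_eq_mul, ← Finset.sum_const, ← Finset.sum_add_distrib]
      exact Finset.sum_le_sum fun x _ => minDist_le_add hBne x (copt j)
    exact_mod_cast this
  set m : ℝ := (phiSet B (Xp j) : ℝ) / ((Xp j).card : ℝ) with hm
  have hnear : ((Xnear j).card : ℝ) * minDist B (copt j) ≤
      phi1 (copt j) (Xp j) + (Xnear j).card * (ε / 9 * m) := by
    have h1 : ((phi1 (copt j) (Xnear j) : ℕ) : ℝ) ≤ phi1 (copt j) (Xp j) := by
      exact_mod_cast Finset.sum_le_sum_of_subset hsub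
    have h2 : ((Xnear j).card : ℝ) * minDist B (copt j) ≤
        phi1 (copt j) (Xnear j) + (Xnear j).card * (ε / 9 * m) := by
      unfold phi1
      push_cast
      rw [← nsmul_eq_mul, ← nsmul_eq_mul, ← Finset.sum_const, ← Finset.sum_const,
        ← Finset.sum_add_distrib]
      refine Finset.sum_le_sum fun x hx => ?_
      have hL : (minDist B (copt j) : ℝ) ≤ hammingDist x (copt j) + minDist B x := by
        rw [hammingDist_comm x]
        exact_mod_cast minDist_le_add hBne (copt j) x
      have hR := ((hXnear j x).1 hx).2
      rw [mul_div_assoc, ← hm] at hR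
      linarith
    linarith
  have hm0 : 0 ≤ m := by positivity
  rw [mul_div_assoc (ε / 9), ← hm]
  have hgoal : 4 * ((Xnear j).card : ℝ) / ε * (ε / 9 * m) = 4 / 9 * ((Xnear j).card * m) := by
    field_simp
  rw [hgoal, ge_iff_le]
  have ha0 : (0 : ℝ) ≤ (Xnear j).card := Nat.cast_nonneg _
  have hΔ0 : (0 : ℝ) ≤ phi1 (copt j) (Xp j) := Nat.cast_nonneg _
  -- An empty cluster has `m = 0` by division by zero, and no near points, so the bound is trivial.
  rcases (Nat.cast_nonneg (α := ℝ) (Xp j).card).eq_or_lt with hn | hn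
  · have ha : ((Xnear j).card : ℝ) = 0 := by linarith
    rw [ha]
    linarith
  have hP : (phiSet B (Xp j) : ℝ) = (Xp j).card * m := by
    rw [hm]
    field_simp
  rw [hP] at hcluster
  generalize ((Xnear j).card : ℝ) = a at *
  generalize ((Xp j).card : ℝ) = n at *
  generalize (phi1 (copt j) (Xp j) : ℝ) = Δ at *
  generalize (minDist B (copt j) : ℝ) = D at *
  have helim : n * (a * m) ≤ n * (2 * Δ + a * (ε / 9 * m)) := by
    have e1 := mul_le_mul_of_nonneg_left hcluster ha0
    have e2 := mul_le_mul_of_nonneg_left hnear hn.le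
    have e3 := mul_le_mul_of_nonneg_right hcard hΔ0
    linarith
  have hdiv := le_of_mul_le_mul_left helim hn
  have hε := mul_le_mul_of_nonneg_right hε1 (mul_nonneg ha0 hm0)
  have ham := mul_nonneg ha0 hm0
  linarith
end

section
/- Let C' = (c_1', ..., c_k') be a center tuple satisfying 𝓡 that minimizes Σ_{j=1}^k Φ(c_j', X_j'). Then Σ_{j=1}^k Φ(c_j', X_j') ≤ OPT + Σ_{j∈I_s} Φ(B, X_j) + Σ_{j∈I_l} n̄_j·R_j. -/
/-! The optimal tuple `copt` is itself feasible for the moved clusters `X_j'`, so the minimizer `c'`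
costs at most `Σ_j Φ(copt_j, X_j')`. Moving a point `x` to its closest point `n(x)` of `B` raises
its distance to a fixed center by at most `H(x, n(x)) = min_{b ∈ B} H(x, b)`, by the triangle
inequality. In a small cluster every point moves, and these increments sum to `Φ(B, X_j)`; in a
large cluster only the near points move, each by at most `R_j`. -/

open Finset
open scoped Classical

theorem hammingDist_eq_minDist {d : ℕ} {B : Finset (Pt d)} {x y : Pt d}
    (h : y ∈ B ∧ ∀ b ∈ B, hammingDist x y ≤ hammingDist x b) :
    hammingDist x y = minDist B x := by
  have hl : IsLeast ((fun b => hammingDist x b) '' (B : Set (Pt d))) (hammingDist x y) := by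
    refine ⟨⟨y, by simpa using h.1, rfl⟩, ?_⟩
    rintro _ ⟨b, hb, rfl⟩
    exact h.2 b (by simpa using hb)
  exact hl.csInf_eq.symm

/-- Replacing the points of `S` by their images under `n` costs at most `Φ(B, S)` extra. -/
theorem phi1M_map_le {d : ℕ} {B : Finset (Pt d)} {n : Pt d → Pt d}
    (hn : ∀ x, n x ∈ B ∧ ∀ b ∈ B, hammingDist x (n x) ≤ hammingDist x b)
    (c : Pt d) (S : Finset (Pt d)) :
    phi1M c (S.val.map n) ≤ phi1 c S + phiSet B S := by
  have h : phi1M c (S.val.map n) = ∑ x ∈ S, hammingDist (n x) c := by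
    simp only [phi1M, Multiset.map_map, Function.comp_def]
    rfl
  rw [h, phi1, phiSet, ← Finset.sum_add_distrib]
  refine Finset.sum_le_sum fun x _ => ?_
  rw [← hammingDist_eq_minDist (hn x), add_comm, hammingDist_comm x (n x)]
  exact hammingDist_triangle (n x) x c

/-- if `C' = (c_1',...,c_k')` is a center tuple satisfying 𝓡 minimizing
`Σ_j Φ(c_j', X_j')`, then `Σ_j Φ(c_j', X_j') ≤ OPT + Σ_{j∈I_s} Φ(B,X_j) + Σ_{j∈I_l} n̄_j·R_j`. -/
theorem stmt4
    (d k : ℕ) (hk : 0 < k) (X : Finset (Pt d))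
    (R : Fin d → Finset (Fin k → Bool)) (hR : ∀ i, (R i).Nonempty)
    (ε α : ℝ) (hε0 : 0 < ε) (hε1 : ε ≤ 1 / 2) (hα : 1 ≤ α)
    -- `copt` is an optimal center tuple satisfying 𝓡; `Xp` is the induced partition
    (copt : Fin k → Pt d) (hcSat : Sat R copt)
    (hcmin : ∀ c, Sat R c → phiTuple copt X ≤ phiTuple c X)
    (Xp : Fin k → Finset (Pt d)) (hpart : IsPartition X Xp)
    (hind : ∀ j, ∀ x ∈ Xp j, ∀ j', hammingDist x (copt j) ≤ hammingDist x (copt j'))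
    -- `B` with Φ(B,X) ≤ α·OPT★ (OPT★ = unconstrained binary k-means optimum of (X,k))
    (B : Finset (Pt d)) (hBne : B.Nonempty)
    (hBapx : ∀ c : Fin k → Pt d, (phiSet B X : ℝ) ≤ α * (phiTuple c X : ℝ))
    -- `nmap x = n(x)`, a fixed closest point of `B` to `x`
    (nmap : Pt d → Pt d)
    (hnmap : ∀ x, nmap x ∈ B ∧ ∀ b ∈ B, hammingDist x (nmap x) ≤ hammingDist x b)
    -- `Is = I_s = {j : Φ(B,X_j) ≤ (ε/(6αk))·Φ(B,X)}`; its complement is `I_l`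
    (Is : Finset (Fin k))
    (hIs : ∀ j, j ∈ Is ↔ (phiSet B (Xp j) : ℝ) ≤ ε / (6 * α * k) * (phiSet B X : ℝ))
    -- `Xnear j = X_j^near`, the points of `X_j` within distance `R_j = (ε/9)·Φ(B,X_j)/n_j` of `B`
    (Xnear : Fin k → Finset (Pt d))
    (hXnear : ∀ j x, x ∈ Xnear j ↔ x ∈ Xp j ∧
      (minDist B x : ℝ) ≤ ε / 9 * (phiSet B (Xp j) : ℝ) / ((Xp j).card : ℝ))
    -- `Xfar j = X_j^far = X_j \ X_j^near`
    (Xfar : Fin k → Finset (Pt d)) (hXfar : ∀ j, Xfar j = Xp j \ Xnear j)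
    -- the multisets `X_j'`
    (X' : Fin k → Multiset (Pt d))
    (hX's : ∀ j ∈ Is, X' j = (Xp j).val.map nmap)
    (hX'l : ∀ j ∉ Is, X' j = (Xfar j).val + (Xnear j).val.map nmap)
    (c' : Fin k → Pt d) (hc'Sat : Sat R c')
    (hc'min : ∀ c, Sat R c → (∑ j, phi1M (c' j) (X' j)) ≤ ∑ j, phi1M (c j) (X' j)) :
    (∑ j, (phi1M (c' j) (X' j) : ℝ)) ≤
      (∑ j, (phi1 (copt j) (Xp j) : ℝ))
        + (∑ j ∈ Is, (phiSet B (Xp j) : ℝ))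
        + ∑ j ∈ Isᶜ, ((Xnear j).card : ℝ) *
            (ε / 9 * (phiSet B (Xp j) : ℝ) / ((Xp j).card : ℝ)) := by
  have key : ∀ j, (phi1M (copt j) (X' j) : ℝ) ≤ (phi1 (copt j) (Xp j) : ℝ) +
      if j ∈ Is then (phiSet B (Xp j) : ℝ)
      else ((Xnear j).card : ℝ) *
        (ε / 9 * (phiSet B (Xp j) : ℝ) / ((Xp j).card : ℝ)) := by
    intro j
    split_ifs with hj
    · rw [hX's j hj]
      exact_mod_cast phi1M_map_le hnmap (copt j) (Xp j)
    · have hsub : Xnear j ⊆ Xp j := fun x hx => ((hXnear j x).1 hx).1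
      have hsplit : phi1 (copt j) (Xfar j) + phi1 (copt j) (Xnear j) = phi1 (copt j) (Xp j) := by
        rw [hXfar j]
        exact Finset.sum_sdiff hsub
      have hadd : phi1M (copt j) (X' j) =
          phi1 (copt j) (Xfar j) + phi1M (copt j) ((Xnear j).val.map nmap) := by
        rw [hX'l j hj]
        simp only [phi1M, phi1, Multiset.map_add, Multiset.sum_add]
        rfl
      have hle : phi1M (copt j) (X' j) ≤ phi1 (copt j) (Xp j) + phiSet B (Xnear j) := by
        have := phi1M_map_le hnmap (copt j) (Xnear j)
        omega
      have hnear : (phiSet B (Xnear j) : ℝ) ≤ ((Xnear j).card : ℝ) *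
          (ε / 9 * (phiSet B (Xp j) : ℝ) / ((Xp j).card : ℝ)) := by
        rw [phiSet, Nat.cast_sum, ← nsmul_eq_mul]
        exact Finset.sum_le_card_nsmul _ _ _ fun x hx => ((hXnear j x).1 hx).2
      have hle' : (phi1M (copt j) (X' j) : ℝ) ≤
          (phi1 (copt j) (Xp j) : ℝ) + (phiSet B (Xnear j) : ℝ) := by exact_mod_cast hle
      linarith
  calc (∑ j, (phi1M (c' j) (X' j) : ℝ))
      ≤ ∑ j, (phi1M (copt j) (X' j) : ℝ) := by exact_mod_cast hc'min copt hcSat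
    _ ≤ _ := Finset.sum_le_sum fun j _ => key j
    _ = _ := by
      rw [Finset.sum_add_distrib, add_assoc, Finset.sum_ite]
      congr 2
      · exact Finset.sum_congr (by ext; simp) fun _ _ => rfl
      · exact Finset.sum_congr (by ext; simp) fun _ _ => rfl
end

section
/- With (c_1, ..., c_k) the optimal constrained center tuple inducing the partition X_1, ..., X_k, it holds that Σ_{j=1}^k Φ(c_j, X_j') ≤ OPT + Σ_{j∈I_s} Φ(B, X_j) + Σ_{j∈I_l} n̄_j·R_j. -/
/-!
By the triangle inequality, replacing a point `x` by its closest center `n(x)` in `B` raises its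
distance to any fixed `c` by at most `H(x, n(x)) = min_{b ∈ B} H(x, b)`
(`hammingDist_nearest_le`), so replacing all points of a set `S` raises the cost of `c` by at
most `Φ(B, S)` (`phi1M_map_nearest_le`). For `j ∈ I_s` this is applied to `S = X_j`. For
`j ∈ I_l` the far points do not move and it is applied to `S = X_j^near`, where each term of
`Φ(B, S)` is at most `R_j`. Summing over `j` gives the bound.
-/

open Finset
open scoped Classical

/-- Snapping a point to its nearest center `n(x)` increases its distance to `c` by at most
`min_{b ∈ B} H(x, b) = H(x, n(x))`. -/
lemma hammingDist_nearest_le {d : ℕ} (B : Finset (Pt d)) (hBne : B.Nonempty)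
    (nmap : Pt d → Pt d)
    (hnmap : ∀ x, nmap x ∈ B ∧ ∀ b ∈ B, hammingDist x (nmap x) ≤ hammingDist x b)
    (c x : Pt d) :
    hammingDist (nmap x) c ≤ hammingDist x c + minDist B x := by
  -- the infimum defining `minDist` is attained because `B` is nonempty
  have hmin : hammingDist x (nmap x) ≤ minDist B x := by
    obtain ⟨b, hb, hbe⟩ := Nat.sInf_mem (s := (fun b => hammingDist x b) '' (B : Set (Pt d)))
      (hBne.to_set.image _)
    unfold minDist
    rw [← hbe]
    exact (hnmap x).2 b hb
  have htri := hammingDist_triangle (nmap x) x c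
  rw [hammingDist_comm (nmap x) x] at htri
  omega

/-- Snapping every point of `S` increases the cost of `c` by at most `Φ(B, S)`. -/
lemma phi1M_map_nearest_le {d : ℕ} (B : Finset (Pt d)) (hBne : B.Nonempty)
    (nmap : Pt d → Pt d)
    (hnmap : ∀ x, nmap x ∈ B ∧ ∀ b ∈ B, hammingDist x (nmap x) ≤ hammingDist x b)
    (c : Pt d) (S : Finset (Pt d)) :
    phi1M c (S.val.map nmap) ≤ phi1 c S + phiSet B S := by
  have h : phi1M c (S.val.map nmap) = ∑ x ∈ S, hammingDist (nmap x) c := by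
    simp [phi1M, Multiset.map_map]
  rw [h, phi1, phiSet, ← Finset.sum_add_distrib]
  exact Finset.sum_le_sum fun x _ => hammingDist_nearest_le B hBne nmap hnmap c x

/-- with `(c_1,...,c_k)` the optimal constrained center tuple inducing the
partition `X_1,...,X_k`, `Σ_j Φ(c_j, X_j') ≤ OPT + Σ_{j∈I_s} Φ(B,X_j) + Σ_{j∈I_l} n̄_j·R_j`. -/
theorem stmt5
    (d k : ℕ) (hk : 0 < k) (X : Finset (Pt d))
    (R : Fin d → Finset (Fin k → Bool)) (hR : ∀ i, (R i).Nonempty)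
    (ε α : ℝ) (hε0 : 0 < ε) (hε1 : ε ≤ 1 / 2) (hα : 1 ≤ α)
    -- `copt` is an optimal center tuple satisfying 𝓡; `Xp` is the induced partition
    (copt : Fin k → Pt d) (hcSat : Sat R copt)
    (hcmin : ∀ c, Sat R c → phiTuple copt X ≤ phiTuple c X)
    (Xp : Fin k → Finset (Pt d)) (hpart : IsPartition X Xp)
    (hind : ∀ j, ∀ x ∈ Xp j, ∀ j', hammingDist x (copt j) ≤ hammingDist x (copt j'))
    -- `B` with Φ(B,X) ≤ α·OPT★ (OPT★ = unconstrained binary k-means optimum of (X,k))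
    (B : Finset (Pt d)) (hBne : B.Nonempty)
    (hBapx : ∀ c : Fin k → Pt d, (phiSet B X : ℝ) ≤ α * (phiTuple c X : ℝ))
    -- `nmap x = n(x)`, a fixed closest point of `B` to `x`
    (nmap : Pt d → Pt d)
    (hnmap : ∀ x, nmap x ∈ B ∧ ∀ b ∈ B, hammingDist x (nmap x) ≤ hammingDist x b)
    -- `Is = I_s = {j : Φ(B,X_j) ≤ (ε/(6αk))·Φ(B,X)}`; its complement is `I_l`
    (Is : Finset (Fin k))
    (hIs : ∀ j, j ∈ Is ↔ (phiSet B (Xp j) : ℝ) ≤ ε / (6 * α * k) * (phiSet B X : ℝ))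
    -- `Xnear j = X_j^near`, the points of `X_j` within distance `R_j = (ε/9)·Φ(B,X_j)/n_j` of `B`
    (Xnear : Fin k → Finset (Pt d))
    (hXnear : ∀ j x, x ∈ Xnear j ↔ x ∈ Xp j ∧
      (minDist B x : ℝ) ≤ ε / 9 * (phiSet B (Xp j) : ℝ) / ((Xp j).card : ℝ))
    -- `Xfar j = X_j^far = X_j \ X_j^near`
    (Xfar : Fin k → Finset (Pt d)) (hXfar : ∀ j, Xfar j = Xp j \ Xnear j)
    -- the multisets `X_j'`
    (X' : Fin k → Multiset (Pt d))
    (hX's : ∀ j ∈ Is, X' j = (Xp j).val.map nmap)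
    (hX'l : ∀ j ∉ Is, X' j = (Xfar j).val + (Xnear j).val.map nmap)
 :
    (∑ j, (phi1M (copt j) (X' j) : ℝ)) ≤
      (∑ j, (phi1 (copt j) (Xp j) : ℝ))
        + (∑ j ∈ Is, (phiSet B (Xp j) : ℝ))
        + ∑ j ∈ Isᶜ, ((Xnear j).card : ℝ) *
            (ε / 9 * (phiSet B (Xp j) : ℝ) / ((Xp j).card : ℝ)) := by
  have hsmall : ∀ j ∈ Is, (phi1M (copt j) (X' j) : ℝ) ≤
      (phi1 (copt j) (Xp j) : ℝ) + (phiSet B (Xp j) : ℝ) := by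
    intro j hj
    rw [hX's j hj]
    exact_mod_cast phi1M_map_nearest_le B hBne nmap hnmap (copt j) (Xp j)
  have hlarge : ∀ j ∈ Isᶜ, (phi1M (copt j) (X' j) : ℝ) ≤
      (phi1 (copt j) (Xp j) : ℝ) + ((Xnear j).card : ℝ) *
        (ε / 9 * (phiSet B (Xp j) : ℝ) / ((Xp j).card : ℝ)) := by
    intro j hj
    have hsub : Xnear j ⊆ Xp j := fun x hx => ((hXnear j x).1 hx).1
    have hadd : phi1M (copt j) (X' j) =
        phi1 (copt j) (Xfar j) + phi1M (copt j) ((Xnear j).val.map nmap) := by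
      rw [hX'l j (Finset.mem_compl.1 hj)]
      simp [phi1M, phi1]
    have hsplit : phi1 (copt j) (Xfar j) + phi1 (copt j) (Xnear j) = phi1 (copt j) (Xp j) := by
      rw [hXfar j]
      exact Finset.sum_sdiff hsub
    have hnear := phi1M_map_nearest_le B hBne nmap hnmap (copt j) (Xnear j)
    have hrad : (phiSet B (Xnear j) : ℝ) ≤ ((Xnear j).card : ℝ) *
        (ε / 9 * (phiSet B (Xp j) : ℝ) / ((Xp j).card : ℝ)) := by
      rw [← nsmul_eq_mul, phiSet, Nat.cast_sum]
      exact Finset.sum_le_card_nsmul _ _ _ fun x hx => ((hXnear j x).1 hx).2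
    have hnat : phi1M (copt j) (X' j) ≤ phi1 (copt j) (Xp j) + phiSet B (Xnear j) := by omega
    have hreal : (phi1M (copt j) (X' j) : ℝ) ≤
        (phi1 (copt j) (Xp j) : ℝ) + (phiSet B (Xnear j) : ℝ) := by exact_mod_cast hnat
    linarith
  have hs := Finset.sum_le_sum hsmall
  have hl := Finset.sum_le_sum hlarge
  rw [Finset.sum_add_distrib] at hs hl
  rw [← Finset.sum_add_sum_compl Is, ← Finset.sum_add_sum_compl Is
    (fun j => (phi1 (copt j) (Xp j) : ℝ))]
  linarith
end

section
/- Let C' = (c_1', ..., c_k') be a center tuple satisfying 𝓡 minimizing Σ_{j=1}^k Φ(c_j', X_j'), and let C'' = (c_1'', ..., c_k'') be any center tuple satisfying 𝓡 with Σ_{j=1}^k Φ(c_j'', X_j') ≤ (1 + ε/16)·Σ_{j=1}^k Φ(c_j', X_j'). Then Φ({c_1'', ..., c_k''}, X) ≤ (1 + ε)·OPT. -/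
/-!
Write `D_j = Φ(B, X_j)`, `D = Φ(B, X)` and `Δ_j = Φ(c_j, X_j)`. Replacing points of `X_j` by their
closest points in `B` changes the cost of `X_j` with respect to an arbitrary center by at most the
total distance moved (`abs_phi1M_move_sub_le`), so it suffices that little distance is moved.

* In a small cluster this distance is `D_j ≤ ε/(6αk)·D`; over all `k` clusters this adds up to at
  most `ε/6·OPT`, since `D ≤ α·OPT`.
* In a large cluster only near points move, and the distance is at most `ε/4·Δ_j`, whatever the
  size of `D_j` (`sum_near_minDist_le`). A near point `x` lies within `ε/9·D_j/n_j` of `B`, so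
  routing every point of `X_j` to `B` through `c_j` and `x` gives `(1 - ε/9)·D_j ≤ Δ_j + n_j·H(x, c_j)`.
  Summing over the near points yields `n̄_j·(1 - ε/9)·D_j ≤ 2·n_j·Δ_j`, while the distance moved is
  at most `n̄_j·ε/9·D_j/n_j`.

Hence for every center tuple the costs of the `X_j'` and of the `X_j` differ by at most
`(5/12)·ε·OPT`. Passing from `X_j` to `X_j'` for `c''` and back for `copt` costs a total factor of
at most `(1 + ε/16)(1 + 5ε/12) + 5ε/12 ≤ 1 + ε`.
-/

open Finset
open scoped Classical

lemma minDist_eq_of_closest {d : ℕ} {B : Finset (Pt d)} {x b : Pt d} (hb : b ∈ B)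
    (hmin : ∀ b' ∈ B, hammingDist x b ≤ hammingDist x b') :
    minDist B x = hammingDist x b := by
  apply le_antisymm
  · exact Nat.sInf_le ⟨b, hb, rfl⟩
  · refine le_csInf (Set.Nonempty.image _ ⟨b, hb⟩) ?_
    rintro _ ⟨b', hb', rfl⟩
    exact hmin b' hb'

lemma minDist_le {d : ℕ} {B : Finset (Pt d)} {b : Pt d} (hb : b ∈ B) (x : Pt d) :
    minDist B x ≤ hammingDist x b :=
  Nat.sInf_le ⟨b, hb, rfl⟩

lemma IsPartition.sum_eq {d k : ℕ} {X : Finset (Pt d)} {Xp : Fin k → Finset (Pt d)}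
    (h : IsPartition X Xp) (f : Pt d → ℕ) :
    ∑ x ∈ X, f x = ∑ j, ∑ x ∈ Xp j, f x := by
  have hX : X = univ.biUnion Xp := by
    ext x
    simp only [mem_biUnion, mem_univ, true_and]
    exact ⟨fun hx => (h.2 x hx).exists, fun ⟨j, hj⟩ => h.1 j hj⟩
  have hd : Set.PairwiseDisjoint (↑(univ : Finset (Fin k))) Xp := by
    intro i _ j _ hij
    refine Finset.disjoint_left.2 fun x hi hj => hij ?_
    exact (h.2 x (h.1 i hi)).unique hi hj
  conv_lhs => rw [hX]
  exact sum_biUnion hd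

lemma phiTuple_le_sum_phi1 {d k : ℕ} {X : Finset (Pt d)} {Xp : Fin k → Finset (Pt d)}
    (h : IsPartition X Xp) (c : Fin k → Pt d) :
    phiTuple c X ≤ ∑ j, phi1 (c j) (Xp j) := by
  rw [phiTuple, h.sum_eq]
  refine sum_le_sum fun j _ => sum_le_sum fun x _ => ?_
  exact Nat.sInf_le ⟨j, rfl⟩

/-- By the triangle inequality, moving the points of `S ⊆ Y` along `n` changes the cost of `Y` with
respect to any center `c` by at most the total distance moved. -/
lemma abs_phi1M_move_sub_le {d : ℕ} (n : Pt d → Pt d) (c : Pt d) {S Y : Finset (Pt d)}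
    (hS : S ⊆ Y) :
    |(phi1M c ((Y \ S).val + S.val.map n) : ℝ) - phi1 c Y| ≤ ∑ x ∈ S, (hammingDist x (n x) : ℝ) := by
  have h1 : phi1M c ((Y \ S).val + S.val.map n) =
      ∑ x ∈ Y \ S, hammingDist x c + ∑ x ∈ S, hammingDist (n x) c := by
    simp only [phi1M, Multiset.map_add, Multiset.sum_add, Multiset.map_map]
    rfl
  have h2 : phi1 c Y = ∑ x ∈ Y \ S, hammingDist x c + ∑ x ∈ S, hammingDist x c :=
    (sum_sdiff hS).symm
  rw [h1, h2]
  push_cast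
  rw [add_sub_add_left_eq_sub, ← sum_sub_distrib]
  refine (abs_sum_le_sum_abs _ _).trans (sum_le_sum fun x _ => ?_)
  have t1 : (hammingDist x c : ℝ) ≤ hammingDist x (n x) + hammingDist (n x) c := by
    exact_mod_cast hammingDist_triangle x (n x) c
  have t2 : (hammingDist (n x) c : ℝ) ≤ hammingDist x (n x) + hammingDist x c := by
    exact_mod_cast hammingDist_triangle_left (n x) c x
  rw [abs_le]
  constructor <;> linarith

/-- The near points of a cluster `Y` are moved by at most `ε/4·Φ(c, Y)` in total, for any center
`c`: near points are few if `Φ(B, Y)` is large compared to `Φ(c, Y)`. -/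
lemma sum_near_minDist_le {d : ℕ} {B : Finset (Pt d)} {n : Pt d → Pt d}
    (hn : ∀ x, n x ∈ B ∧ ∀ b ∈ B, hammingDist x (n x) ≤ hammingDist x b)
    {ε : ℝ} (hε0 : 0 < ε) (hε1 : ε ≤ 1 / 2) (c : Pt d) {S Y : Finset (Pt d)} (hS : S ⊆ Y)
    (hnear : ∀ x ∈ S, (minDist B x : ℝ) ≤ ε / 9 * (phiSet B Y : ℝ) / (Y.card : ℝ)) :
    ∑ x ∈ S, (minDist B x : ℝ) ≤ ε / 4 * phi1 c Y := by
  rcases Y.eq_empty_or_nonempty with rfl | hY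
  · simp [subset_empty.1 hS, phi1]
  have hY0 : (0 : ℝ) < Y.card := by exact_mod_cast hY.card_pos
  have hSY : (S.card : ℝ) ≤ Y.card := by exact_mod_cast card_le_card hS
  have hnear' : ∀ x ∈ S, (Y.card : ℝ) * minDist B x ≤ ε / 9 * phiSet B Y := by
    intro x hx
    have := (le_div_iff₀ hY0).1 (hnear x hx)
    linarith
  set D : ℝ := ((phiSet B Y : ℕ) : ℝ) with hD
  set Δ : ℝ := ((phi1 c Y : ℕ) : ℝ) with hΔ
  have hΔ0 : 0 ≤ Δ := Nat.cast_nonneg _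
  -- route every `y ∈ Y` to `B` through `c` and the near point `x`
  have hroute : ∀ x ∈ S, (1 - ε / 9) * D ≤ Δ + Y.card * (hammingDist x c : ℝ) := by
    intro x hx
    have h : phiSet B Y ≤ ∑ y ∈ Y, (hammingDist y c + (hammingDist x c + minDist B x)) := by
      refine sum_le_sum fun y _ => (minDist_le (hn x).1 y).trans ?_
      rw [minDist_eq_of_closest (hn x).1 (hn x).2]
      have t1 := hammingDist_triangle y c (n x)
      have t2 := hammingDist_triangle_left c (n x) x
      omega
    have h' : D ≤ Δ + Y.card * ((hammingDist x c : ℝ) + minDist B x) := by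
      rw [sum_add_distrib, sum_const, smul_eq_mul] at h
      rw [hD, hΔ, phi1]
      exact_mod_cast h
    linarith [hnear' x hx]
  have hsumS : ∑ x ∈ S, (hammingDist x c : ℝ) ≤ Δ := by
    rw [hΔ, phi1]
    push_cast
    exact sum_le_sum_of_subset_of_nonneg hS fun _ _ _ => Nat.cast_nonneg _
  have hcount : S.card * ((1 - ε / 9) * D) ≤ 2 * (Y.card * Δ) := by
    have h := sum_le_sum hroute
    rw [sum_const, sum_add_distrib, sum_const, nsmul_eq_mul, nsmul_eq_mul, ← mul_sum] at h
    have := mul_le_mul_of_nonneg_right hSY hΔ0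
    have := mul_le_mul_of_nonneg_left hsumS hY0.le
    linarith
  have hmove : Y.card * ∑ x ∈ S, (minDist B x : ℝ) ≤ S.card * (ε / 9 * D) := by
    have h := sum_le_sum hnear'
    rwa [← mul_sum, sum_const, nsmul_eq_mul] at h
  have hSD : (S.card : ℝ) * D ≤ 36 / 17 * (Y.card * Δ) := by
    have hp : 0 ≤ (S.card : ℝ) * D := by positivity
    nlinarith
  have hfin : Y.card * ∑ x ∈ S, (minDist B x : ℝ) ≤ Y.card * (ε / 4 * Δ) := by
    have h1 := mul_le_mul_of_nonneg_left hSD (by positivity : 0 ≤ ε / 9)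
    have h2 : 0 ≤ ε * (Y.card * Δ) := by positivity
    linarith
  exact le_of_mul_le_mul_left hfin hY0

/-- if `C'` minimizes `Σ_j Φ(·, X_j')` among tuples satisfying 𝓡 and `C''`
satisfies 𝓡 with `Σ_j Φ(c_j'', X_j') ≤ (1+ε/16)·Σ_j Φ(c_j', X_j')`, then
`Φ({c_1'',...,c_k''}, X) ≤ (1+ε)·OPT`. -/
theorem stmt6
    (d k : ℕ) (hk : 0 < k) (X : Finset (Pt d))
    (R : Fin d → Finset (Fin k → Bool)) (hR : ∀ i, (R i).Nonempty)
    (ε α : ℝ) (hε0 : 0 < ε) (hε1 : ε ≤ 1 / 2) (hα : 1 ≤ α)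
    -- `copt` is an optimal center tuple satisfying 𝓡; `Xp` is the induced partition
    (copt : Fin k → Pt d) (hcSat : Sat R copt)
    (hcmin : ∀ c, Sat R c → phiTuple copt X ≤ phiTuple c X)
    (Xp : Fin k → Finset (Pt d)) (hpart : IsPartition X Xp)
    (hind : ∀ j, ∀ x ∈ Xp j, ∀ j', hammingDist x (copt j) ≤ hammingDist x (copt j'))
    -- `B` with Φ(B,X) ≤ α·OPT★ (OPT★ = unconstrained binary k-means optimum of (X,k))
    (B : Finset (Pt d)) (hBne : B.Nonempty)
    (hBapx : ∀ c : Fin k → Pt d, (phiSet B X : ℝ) ≤ α * (phiTuple c X : ℝ))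
    -- `nmap x = n(x)`, a fixed closest point of `B` to `x`
    (nmap : Pt d → Pt d)
    (hnmap : ∀ x, nmap x ∈ B ∧ ∀ b ∈ B, hammingDist x (nmap x) ≤ hammingDist x b)
    -- `Is = I_s = {j : Φ(B,X_j) ≤ (ε/(6αk))·Φ(B,X)}`; its complement is `I_l`
    (Is : Finset (Fin k))
    (hIs : ∀ j, j ∈ Is ↔ (phiSet B (Xp j) : ℝ) ≤ ε / (6 * α * k) * (phiSet B X : ℝ))
    -- `Xnear j = X_j^near`, the points of `X_j` within distance `R_j = (ε/9)·Φ(B,X_j)/n_j` of `B`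
    (Xnear : Fin k → Finset (Pt d))
    (hXnear : ∀ j x, x ∈ Xnear j ↔ x ∈ Xp j ∧
      (minDist B x : ℝ) ≤ ε / 9 * (phiSet B (Xp j) : ℝ) / ((Xp j).card : ℝ))
    -- `Xfar j = X_j^far = X_j \ X_j^near`
    (Xfar : Fin k → Finset (Pt d)) (hXfar : ∀ j, Xfar j = Xp j \ Xnear j)
    -- the multisets `X_j'`
    (X' : Fin k → Multiset (Pt d))
    (hX's : ∀ j ∈ Is, X' j = (Xp j).val.map nmap)
    (hX'l : ∀ j ∉ Is, X' j = (Xfar j).val + (Xnear j).val.map nmap)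
    (c' : Fin k → Pt d) (hc'Sat : Sat R c')
    (hc'min : ∀ c, Sat R c → (∑ j, phi1M (c' j) (X' j)) ≤ ∑ j, phi1M (c j) (X' j))
    (c'' : Fin k → Pt d) (hc''Sat : Sat R c'')
    (hc'' : (∑ j, (phi1M (c'' j) (X' j) : ℝ)) ≤
      (1 + ε / 16) * ∑ j, (phi1M (c' j) (X' j) : ℝ)) :
    (phiTuple c'' X : ℝ) ≤ (1 + ε) * ∑ j, (phi1 (copt j) (Xp j) : ℝ) := by
  set D : ℝ := ((phiSet B X : ℕ) : ℝ) with hD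
  set OPT : ℝ := ∑ j, (phi1 (copt j) (Xp j) : ℝ) with hOPT
  have hα0 : 0 < α := by linarith
  have hk0 : (0 : ℝ) < k := by exact_mod_cast hk
  have hOPT0 : 0 ≤ OPT := sum_nonneg fun _ _ => Nat.cast_nonneg _
  have hDα : D ≤ α * OPT := by
    refine (hBapx copt).trans (mul_le_mul_of_nonneg_left ?_ hα0.le)
    rw [hOPT]
    exact_mod_cast phiTuple_le_sum_phi1 hpart copt
  have hmd : ∀ x, (hammingDist x (nmap x) : ℝ) = minDist B x := fun x => by
    rw [minDist_eq_of_closest (hnmap x).1 (hnmap x).2]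
  have hcluster : ∀ (j : Fin k) (c : Pt d),
      |(phi1M c (X' j) : ℝ) - phi1 c (Xp j)| ≤
        ε / (6 * α * k) * D + ε / 4 * phi1 (copt j) (Xp j) := by
    intro j c
    by_cases hj : j ∈ Is
    · have h := abs_phi1M_move_sub_le nmap c (Subset.refl (Xp j))
      rw [Finset.sdiff_self, Finset.empty_val, zero_add, ← hX's j hj] at h
      have hsmall := (hIs j).1 hj
      have hnn : 0 ≤ ε / 4 * (phi1 (copt j) (Xp j) : ℝ) := by positivity
      simp only [hmd] at h
      rw [phiSet] at hsmall
      push_cast at hsmall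
      linarith
    · have hsub : Xnear j ⊆ Xp j := fun x hx => ((hXnear j x).1 hx).1
      have h := abs_phi1M_move_sub_le nmap c hsub
      rw [← hXfar j, ← hX'l j hj] at h
      have hnn : 0 ≤ ε / (6 * α * k) * D := by positivity
      simp only [hmd] at h
      have := sum_near_minDist_le hnmap hε0 hε1 (copt j) hsub
        fun x hx => ((hXnear j x).1 hx).2
      linarith
  have herr : ∑ j : Fin k, (ε / (6 * α * k) * D + ε / 4 * (phi1 (copt j) (Xp j) : ℝ)) ≤
      5 / 12 * ε * OPT := by
    rw [sum_add_distrib, sum_const, card_univ, Fintype.card_fin, nsmul_eq_mul, ← mul_sum]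
    have h1 : (k : ℝ) * (ε / (6 * α * k) * D) = ε / (6 * α) * D := by field_simp
    have h2 : ε / (6 * α) * D ≤ ε / (6 * α) * (α * OPT) :=
      mul_le_mul_of_nonneg_left hDα (by positivity)
    have h3 : ε / (6 * α) * (α * OPT) = ε / 6 * OPT := by field_simp
    linarith
  have htotal : ∀ c : Fin k → Pt d,
      |∑ j, (phi1M (c j) (X' j) : ℝ) - ∑ j, (phi1 (c j) (Xp j) : ℝ)| ≤ 5 / 12 * ε * OPT := by
    intro c
    rw [← sum_sub_distrib]
    exact ((abs_sum_le_sum_abs _ _).trans (sum_le_sum fun j _ => hcluster j (c j))).trans herr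
  have hup : (phiTuple c'' X : ℝ) ≤ ∑ j, (phi1 (c'' j) (Xp j) : ℝ) := by
    exact_mod_cast phiTuple_le_sum_phi1 hpart c''
  have hmin : ∑ j, (phi1M (c' j) (X' j) : ℝ) ≤ ∑ j, (phi1M (copt j) (X' j) : ℝ) := by
    exact_mod_cast hc'min copt hcSat
  have e1 := (abs_le.1 (htotal c'')).1
  have e2 := (abs_le.1 (htotal copt)).2
  have hchain : ∑ j, (phi1M (c'' j) (X' j) : ℝ) ≤ (1 + ε / 16) * (OPT + 5 / 12 * ε * OPT) :=
    hc''.trans (mul_le_mul_of_nonneg_left (by linarith) (by positivity))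
  have hεε : ε * (ε * OPT) ≤ 1 / 2 * (ε * OPT) :=
    mul_le_mul_of_nonneg_right hε1 (by positivity)
  have hεO : 0 ≤ ε * OPT := by positivity
  nlinarith
end

section
/- Let j ∈ I_l and let γ = ε²/(54αk) and γ' = γ/2. Let O be a random point of X drawn by D²-sampling with respect to B, and define a random variable Y with values in X_j' ∪ {⊥} as follows: if O ∉ X_j^far then Y = ⊥; otherwise, with probability 1/2 set Y = O, and with probability 1/2 set Y to a uniformly random element of the multiset n(X_j^near) = {n(x) : x ∈ X_j^near}. Then for every element x of the multiset X_j', Pr[Y = x] ≥ γ'/|X_j'|. -/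
/-!
Write `T = Φ(B,X)`, `P = Φ(B,X_j)`, `n = |X_j|`. Both kinds of copies have probability at least
`(1/2) · (ε/9) · P / (n T)`, which is at least `γ'/n` because `P > ε T / (6αk)`.

* A far copy `x` satisfies `min_b H(x,b) > (ε/9) P / n` by definition of `X_j^far`.
* The near points together cost at most `(ε/9) P`, so the far points cost at least
  `(1 - ε/9) P ≥ (ε/9) P`; this mass is spread evenly over `|X_j^near| ≤ n` near copies.
-/

open Finset
open scoped Classical

/-- the copies of the multiset `X_j' = X_j^far ∪ {n(x) : x ∈ X_j^near}` are
indexed by the points of `X_j` (the copy indexed by `x` is `x` itself if `x ∈ X_j^far`, and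
`n(x)` if `x ∈ X_j^near`), so that `|X_j'| = |X_j|`.  For `x ∈ X_j`, the probability that
`Y` equals the copy indexed by `x` is `(1/2)·(min_{b∈B}H(x,b))/Φ(B,X)` if `x ∈ X_j^far`,
and `(1/2)·(Σ_{p∈X_j^far} min_{b∈B}H(p,b))/Φ(B,X)·(1/|X_j^near|)` if `x ∈ X_j^near`.
The claim is that each such probability is at least `γ'/|X_j'|` with `γ' = γ/2`,
`γ = ε²/(54αk)`. -/
theorem stmt9
    (d k : ℕ) (hk : 0 < k) (X : Finset (Pt d))
    (R : Fin d → Finset (Fin k → Bool)) (hR : ∀ i, (R i).Nonempty)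
    (ε α : ℝ) (hε0 : 0 < ε) (hε1 : ε ≤ 1 / 2) (hα : 1 ≤ α)
    -- `copt` is an optimal center tuple satisfying 𝓡; `Xp` is the induced partition
    (copt : Fin k → Pt d) (hcSat : Sat R copt)
    (hcmin : ∀ c, Sat R c → phiTuple copt X ≤ phiTuple c X)
    (Xp : Fin k → Finset (Pt d)) (hpart : IsPartition X Xp)
    (hind : ∀ j, ∀ x ∈ Xp j, ∀ j', hammingDist x (copt j) ≤ hammingDist x (copt j'))
    -- `B` with Φ(B,X) ≤ α·OPT★ (OPT★ = unconstrained binary k-means optimum of (X,k))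
    (B : Finset (Pt d)) (hBne : B.Nonempty)
    (hBapx : ∀ c : Fin k → Pt d, (phiSet B X : ℝ) ≤ α * (phiTuple c X : ℝ))
    (hBpos : 0 < phiSet B X)
    -- `nmap x = n(x)`, a fixed closest point of `B` to `x`
    (nmap : Pt d → Pt d)
    (hnmap : ∀ x, nmap x ∈ B ∧ ∀ b ∈ B, hammingDist x (nmap x) ≤ hammingDist x b)
    -- `Xnear j = X_j^near`, the points of `X_j` within distance `R_j = (ε/9)·Φ(B,X_j)/n_j` of `B`
    (Xnear : Fin k → Finset (Pt d))
    (hXnear : ∀ j x, x ∈ Xnear j ↔ x ∈ Xp j ∧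
      (minDist B x : ℝ) ≤ ε / 9 * (phiSet B (Xp j) : ℝ) / ((Xp j).card : ℝ))
    -- `Xfar j = X_j^far = X_j \ X_j^near`
    (Xfar : Fin k → Finset (Pt d)) (hXfar : ∀ j, Xfar j = Xp j \ Xnear j)
    (j : Fin k)
    (hjl : (phiSet B (Xp j) : ℝ) > ε / (6 * α * k) * (phiSet B X : ℝ)) :
    ∀ x ∈ Xp j,
      (if x ∈ Xfar j then
          1 / 2 * ((minDist B x : ℝ) / (phiSet B X : ℝ))
        else
          1 / 2 * ((∑ p ∈ Xfar j, (minDist B p : ℝ)) / (phiSet B X : ℝ))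
            * (1 / ((Xnear j).card : ℝ)))
      ≥ (ε ^ 2 / (54 * α * k) / 2) / ((Xp j).card : ℝ) := by
  intro x hx
  have hT : (0 : ℝ) < phiSet B X := by exact_mod_cast hBpos
  have hn : (0 : ℝ) < (Xp j).card := by exact_mod_cast Finset.card_pos.mpr ⟨x, hx⟩
  have hk' : (0 : ℝ) < k := by exact_mod_cast hk
  have hα0 : 0 < α := by linarith
  have hP0 : (0 : ℝ) ≤ phiSet B (Xp j) := Nat.cast_nonneg _
  have hPsum : (phiSet B (Xp j) : ℝ) = ∑ p ∈ Xp j, (minDist B p : ℝ) := by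
    simp [phiSet]
  have hnearsub : Xnear j ⊆ Xp j := fun y hy => ((hXnear j y).1 hy).1
  set T : ℝ := (phiSet B X : ℝ)
  set P : ℝ := (phiSet B (Xp j) : ℝ)
  set n : ℝ := ((Xp j).card : ℝ)
  have key : (ε ^ 2 / (54 * α * k) / 2) / n ≤ 1 / 2 * (ε / 9 * P / T) * (1 / n) := by
    have h1 : ε / (6 * α * k) ≤ P / T := by
      rw [le_div_iff₀ hT]
      exact hjl.le
    calc (ε ^ 2 / (54 * α * k) / 2) / n
        = 1 / 2 * (ε / 9 * (ε / (6 * α * k))) * (1 / n) := by field_simp; norm_num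
      _ ≤ 1 / 2 * (ε / 9 * (P / T)) * (1 / n) := by gcongr
      _ = 1 / 2 * (ε / 9 * P / T) * (1 / n) := by ring
  refine ge_iff_le.2 (key.trans ?_)
  split_ifs with hfar
  · have hd : ε / 9 * P / n ≤ (minDist B x : ℝ) := by
      rw [hXfar, Finset.mem_sdiff, hXnear] at hfar
      by_contra hlt
      exact hfar.2 ⟨hx, (not_le.1 hlt).le⟩
    calc 1 / 2 * (ε / 9 * P / T) * (1 / n) = 1 / 2 * ((ε / 9 * P / n) / T) := by ring
      _ ≤ 1 / 2 * ((minDist B x : ℝ) / T) := by gcongr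
  · have hxnear : x ∈ Xnear j := by
      by_contra h
      exact hfar (by rw [hXfar]; exact Finset.mem_sdiff.2 ⟨hx, h⟩)
    have hm : (0 : ℝ) < (Xnear j).card := by exact_mod_cast Finset.card_pos.mpr ⟨x, hxnear⟩
    have hmn : ((Xnear j).card : ℝ) ≤ n := Nat.cast_le.2 (Finset.card_le_card hnearsub)
    have hsplit : ∑ p ∈ Xfar j, (minDist B p : ℝ) + ∑ p ∈ Xnear j, (minDist B p : ℝ) = P := by
      rw [hPsum, hXfar]
      exact Finset.sum_sdiff hnearsub
    have hnear : ∑ p ∈ Xnear j, (minDist B p : ℝ) ≤ ε / 9 * P := by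
      calc ∑ p ∈ Xnear j, (minDist B p : ℝ)
          ≤ ∑ _p ∈ Xnear j, ε / 9 * P / n :=
            Finset.sum_le_sum fun p hp => ((hXnear j p).1 hp).2
        _ = (Xnear j).card * (ε / 9 * P / n) := by rw [Finset.sum_const, nsmul_eq_mul]
        _ ≤ n * (ε / 9 * P / n) := by gcongr
        _ = ε / 9 * P := by field_simp
    have hfarsum : ε / 9 * P ≤ ∑ p ∈ Xfar j, (minDist B p : ℝ) := by
      have h2 : ε * P ≤ 1 / 2 * P := mul_le_mul_of_nonneg_right hε1 hP0
      linarith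
    gcongr
end

section
/- Let A ∈ {0,1}^{n×d}, let r ≥ 1, and let f : {0,1}^r × {0,1}^r → {0,1} be an arbitrary inner product function. Set k = 2^r, fix an enumeration λ_1, ..., λ_k of {0,1}^r, let X be the multiset of rows of A, and for every i ∈ {1,...,d} let R_i = {(f(λ_1, x), ..., f(λ_k, x)) : x ∈ {0,1}^r} ⊆ {0,1}^k. Then for every center tuple (c_1, ..., c_k) satisfying 𝓡 = (R_1, ..., R_d), there exist matrices U ∈ {0,1}^{n×r} and V ∈ {0,1}^{r×d} such that ‖A − U·V‖₀ = Σ_{a row of A} min_{t∈{1,...,k}} H(a, c_t) = Φ({c_1,...,c_k}, X). -/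
/-!
Row `i` of `U` is `λ_t` for a center `c_t` nearest to row `i` of `A`, and column `j` of `V` is a
string `x` witnessing that `(c_1[j], ..., c_k[j])` lies in `R_j`. Then row `i` of `U·V` is exactly
that nearest center, so counting differing entries row by row (`l0_eq_sum_hammingDist`) gives the
sum of the minimal distances.
-/

open Finset
open scoped Classical

/-- `‖A - M‖₀`: the number of entries on which the two binary matrices differ. -/
def l0 {n d : ℕ} (A M : Fin n → Fin d → Bool) : ℕ :=
  (Finset.univ.filter fun p : Fin n × Fin d => A p.1 p.2 ≠ M p.1 p.2).card

/-- The product `U·V` with respect to the inner product function `f`: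
`(U·V)_{ij} = f(U_i, V^j)`. -/
def bmul {n r d : ℕ} (f : (Fin r → Bool) → (Fin r → Bool) → Bool)
    (U : Fin n → Fin r → Bool) (V : Fin r → Fin d → Bool) : Fin n → Fin d → Bool :=
  fun i j => f (U i) fun t => V t j

/-- Counting the differing entries of two matrices row by row. -/
theorem l0_eq_sum_hammingDist {n d : ℕ} (A M : Fin n → Fin d → Bool) :
    l0 A M = ∑ i, hammingDist (A i) (M i) := by
  simp only [l0, hammingDist, Finset.card_filter, Fintype.sum_prod_type]

/-- one direction of the reduction of Fomin et al. / Ban et al..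
`lam` enumerates `{0,1}^r` and `R_i = {(f(λ_1,x),...,f(λ_k,x)) : x ∈ {0,1}^r}` (so a tuple
`c` satisfies 𝓡 iff for each column `i` there is `x` with `c_t[i] = f(λ_t, x)` for all `t`).
For every such `c` there are `U, V` with
`‖A - U·V‖₀ = Σ_{rows a of A} min_t H(a, c_t) = Φ({c_1,...,c_k}, X)`,
`X` the multiset of rows of `A`. -/
theorem stmt11 (n d r : ℕ) (hr : 1 ≤ r) (A : Fin n → Fin d → Bool)
    (f : (Fin r → Bool) → (Fin r → Bool) → Bool)
    (k : ℕ) (hk : k = 2 ^ r)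
    (lam : Fin k → (Fin r → Bool)) (hlam : Function.Bijective lam)
    (c : Fin k → Pt d)
    (hsat : ∀ i : Fin d, ∃ x : Fin r → Bool, ∀ t, c t i = f (lam t) x) :
    ∃ (U : Fin n → Fin r → Bool) (V : Fin r → Fin d → Bool),
      (l0 A (bmul f U V) = ∑ i, sInf (Set.range fun t => hammingDist (A i) (c t))) ∧
      l0 A (bmul f U V) = phiTupleM c (Multiset.map A Finset.univ.val) := by
  have hkpos : 0 < k := hk ▸ Nat.two_pow_pos r
  have : Nonempty (Fin k) := ⟨⟨0, hkpos⟩⟩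
  choose x hx using hsat
  -- `s i` is the index of a center nearest to row `i`; the range is nonempty since `k > 0`,
  -- so `sInf` is an attained minimum.
  have hmin : ∀ i, ∃ t, hammingDist (A i) (c t) =
      sInf (Set.range fun t => hammingDist (A i) (c t)) := fun i =>
    Nat.sInf_mem (Set.range_nonempty fun t => hammingDist (A i) (c t))
  choose s hs using hmin
  have key : l0 A (bmul f (fun i => lam (s i)) fun t j => x j t) =
      ∑ i, sInf (Set.range fun t => hammingDist (A i) (c t)) := by
    have hrow : bmul f (fun i => lam (s i)) (fun t j => x j t) = fun i => c (s i) := by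
      funext i j
      exact (hx j (s i)).symm
    rw [hrow, l0_eq_sum_hammingDist]
    exact Finset.sum_congr rfl fun i _ => hs i
  refine ⟨fun i => lam (s i), fun t j => x j t, key, key.trans ?_⟩
  simp only [phiTupleM, Multiset.map_map]
  rfl
end

section
/- Let (X, k, 𝓡) be a constrained binary k-means instance and let X_1, ..., X_k be any partition of X. Then the minimum over center tuples (c_1, ..., c_k) satisfying 𝓡 of Σ_{j=1}^k Φ(c_j, X_j) equals Σ_{i=1}^d min_{(b_1,...,b_k)∈R_i} Σ_{j=1}^k g_j(i, b_j), where g_j(i, 1) = |{x ∈ X_j : x[i] = 0}| and g_j(i, 0) = |{x ∈ X_j : x[i] = 1}|; that is, the constrained clustering cost decomposes coordinatewise and is minimized by independently choosing, for each coordinate i, a tuple in R_i minimizing the weighted mismatch count. -/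
/-!
The cost of a center tuple is a triple sum over clusters `j`, points `x ∈ X_j` and coordinates `i`
of the indicator of `x i ≠ c_j i`. Exchanging the sums (`sum_phi1_eq`) writes it as a sum over `i`
of a cost depending only on the column `(c_1[i], ..., c_k[i])`. Since `Sat` constrains each column
separately, any choice of tuples `b_i ∈ R_i` is the family of columns of a feasible center tuple,
so the minimum of the sum is the sum of the columnwise minima.
-/

open Finset
open scoped Classical

/-- Double counting of mismatches: the clustering cost is the sum of its columnwise costs. -/
theorem sum_phi1_eq {d k : ℕ} (c : Fin k → Pt d) (Xp : Fin k → Finset (Pt d)) :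
    ∑ j, phi1 (c j) (Xp j) = ∑ i : Fin d, ∑ j, ((Xp j).filter fun x => x i ≠ c j i).card := by
  rw [Finset.sum_comm]
  refine Finset.sum_congr rfl fun j _ => ?_
  simp only [phi1, hammingDist, Finset.card_filter]
  rw [Finset.sum_comm]

/-- the constrained clustering cost decomposes coordinatewise:
the minimum over center tuples satisfying 𝓡 of `Σ_j Φ(c_j, X_j)` equals
`Σ_i min_{(b_1,...,b_k) ∈ R_i} Σ_j g_j(i, b_j)`, where `g_j(i,b_j)` counts the points
`x ∈ X_j` with `x[i] ≠ b_j`. -/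
theorem stmt13 (d k : ℕ) (hk : 0 < k) (X : Finset (Pt d))
    (R : Fin d → Finset (Fin k → Bool)) (hR : ∀ i, (R i).Nonempty)
    (Xp : Fin k → Finset (Pt d)) (hpart : IsPartition X Xp) :
    sInf {N : ℕ | ∃ c : Fin k → Pt d, Sat R c ∧ N = ∑ j, phi1 (c j) (Xp j)} =
      ∑ i : Fin d, (R i).inf' (hR i)
        (fun b => ∑ j, ((Xp j).filter fun x => x i ≠ b j).card) := by
  refine IsLeast.csInf_eq ⟨?_, ?_⟩
  -- The columns `b i` attain the minimum over `R i`; the center `c_j` has entries `b i j`.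
  · choose b hb hmin using fun i => Finset.exists_mem_eq_inf' (hR i)
      (fun b : Fin k → Bool => ∑ j, ((Xp j).filter fun x => x i ≠ b j).card)
    refine ⟨fun j i => b i j, hb, ?_⟩
    rw [sum_phi1_eq]
    exact Finset.sum_congr rfl fun i _ => hmin i
  · rintro N ⟨c, hc, rfl⟩
    rw [sum_phi1_eq]
    refine Finset.sum_le_sum fun i _ => ?_
    have h := Finset.inf'_le
      (fun b : Fin k → Bool => ∑ j, ((Xp j).filter fun x => x i ≠ b j).card) (hc i)
    exact h
end
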